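/- Let n ≥ 1, 1 ≤ j ≤ n, a ∈ ℂⁿ, let φ be a (0,j)-coefficient system on ℂⁿ, and fix k ∈ {1,…,n}. Then Σ'_{|J|=j−1, k∉J} φ_{kJ} · ( Σ_{m∈J} σ^{m(k∪(J∖m))}_{kJ} a_m ) = Σ'_{|J|=j−1, k∈J} Σ_{m=1}^n a_m φ_{mJ}. -/

import Mathlib

open scoped BigOperators
open MeasureTheory

namespace HM

/-- The finset of strictly increasing multi-indices of length `q` with entries in `Fin n`. -/
def Incr (n q : ℕ) : Finset (Fin q → Fin n) :=
  Finset.univ.filter (fun I => ∀ a b : Fin q, a < b → I a < I b)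

/-- Prepend the index `k` to a `(q-1)`-tuple `J`, giving the `q`-tuple `kJ`. -/
def cons' {n : ℕ} (q : ℕ) (k : Fin n) (J : Fin (q - 1) → Fin n) : Fin q → Fin n :=
  fun i => if h : (i : ℕ) = 0 then k else J ⟨(i : ℕ) - 1, by have := i.isLt; omega⟩

/-- A (0,q)-coefficient system: an antisymmetric assignment of complex numbers to q-tuples
(hence vanishing on tuples with a repeated index). -/
def IsCoeff {n q : ℕ} (u : (Fin q → Fin n) → ℂ) : Prop :=
  ∀ (σ : Equiv.Perm (Fin q)) (I : Fin q → Fin n),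
    u (I ∘ σ) = ((Equiv.Perm.sign σ : ℤ) : ℂ) * u I

/-- `|u|²`, the sum of `|u_I|²` over strictly increasing multi-indices `I`. -/
noncomputable def nSq {n q : ℕ} (u : (Fin q → Fin n) → ℂ) : ℝ :=
  ∑ I ∈ Incr n q, ‖u I‖ ^ 2

/-- The Hessian form of a matrix `H` on coefficient systems:
`H(u,v) = Σ'_{|J|=q-1} Σ_{k,l} H_{lk} u_{lJ} conj(v_{kJ})`. -/
noncomputable def mForm {n : ℕ} (q : ℕ) (H : Matrix (Fin n) (Fin n) ℂ)
    (u v : (Fin q → Fin n) → ℂ) : ℂ :=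
  ∑ J ∈ Incr n (q - 1), ∑ k : Fin n, ∑ l : Fin n,
    H l k * u (cons' q l J) * star (v (cons' q k J))

/-- `σ^I_J`: the sign of the permutation rearranging `I` into `J`; `0` if `J` is not a
rearrangement of `I` (in particular `0` if `I` has a repeated entry). -/
def permSign {n p : ℕ} (I J : Fin p → Fin n) : ℤ :=
  if Function.Injective I then
    ∑ π : Equiv.Perm (Fin p), if J = I ∘ π then ((Equiv.Perm.sign π : ℤ)) else 0
  else 0

/-- The Wirtinger derivative `∂f/∂z_k` of a complex-valued function, via real Fréchet
derivatives: `½(∂f/∂x_k − i ∂f/∂y_k)`. -/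
noncomputable def dz {n : ℕ} (f : (Fin n → ℂ) → ℂ) (k : Fin n) (z : Fin n → ℂ) : ℂ :=
  (1/2 : ℂ) * (fderiv ℝ f z (Pi.single k 1) - Complex.I * fderiv ℝ f z (Pi.single k Complex.I))

/-- The Wirtinger derivative `∂f/∂z̄_k`: `½(∂f/∂x_k + i ∂f/∂y_k)`. -/
noncomputable def dzbar {n : ℕ} (f : (Fin n → ℂ) → ℂ) (k : Fin n) (z : Fin n → ℂ) : ℂ :=
  (1/2 : ℂ) * (fderiv ℝ f z (Pi.single k 1) + Complex.I * fderiv ℝ f z (Pi.single k Complex.I))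

/-- The mixed Wirtinger Hessian `∂²f/∂z_l∂z̄_k` of a real-valued function. -/
noncomputable def hessW {n : ℕ} (f : (Fin n → ℂ) → ℝ) (l k : Fin n) (z : Fin n → ℂ) : ℂ :=
  dz (fun w => dzbar (fun y => (f y : ℂ)) k w) l z

/-- The Hessian form `i∂∂̄f(u,u)(z) = Σ'_{|J|=q-1} Σ_{k,l} ∂²f/∂z_l∂z̄_k(z) u_{lJ} conj(u_{kJ})`. -/
noncomputable def hForm {n : ℕ} (q : ℕ) (f : (Fin n → ℂ) → ℝ)
    (u : (Fin q → Fin n) → ℂ) (z : Fin n → ℂ) : ℂ :=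
  ∑ J ∈ Incr n (q - 1), ∑ k : Fin n, ∑ l : Fin n,
    hessW f l k z * u (cons' q l J) * star (u (cons' q k J))

/-- Coefficient of `∂̄u` on the `(q+1)`-tuple `M`:
`(∂̄u)_M = Σ_k Σ'_{|J|=q} σ^{kJ}_M ∂u_J/∂z̄_k`. -/
noncomputable def dbarC {n : ℕ} (q : ℕ) (u : (Fin q → Fin n) → (Fin n → ℂ) → ℂ)
    (M : Fin (q + 1) → Fin n) (z : Fin n → ℂ) : ℂ :=
  ∑ k : Fin n, ∑ J ∈ Incr n q, ((permSign (cons' (q + 1) k J) M : ℤ) : ℂ) * dzbar (u J) k z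

/-- Coefficient of `ϑu` on the `(q-1)`-tuple `J`: `(ϑu)_J = −Σ_l ∂u_{lJ}/∂z_l`. -/
noncomputable def thetaC {n : ℕ} (q : ℕ) (u : (Fin q → Fin n) → (Fin n → ℂ) → ℂ)
    (J : Fin (q - 1) → Fin n) (z : Fin n → ℂ) : ℂ :=
  -∑ l : Fin n, dz (u (cons' q l J)) l z

/-- Pointwise `|∂̄u|²`. -/
noncomputable def dbarSq {n : ℕ} (q : ℕ) (u : (Fin q → Fin n) → (Fin n → ℂ) → ℂ)
    (z : Fin n → ℂ) : ℝ :=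
  ∑ M ∈ Incr n (q + 1), ‖dbarC q u M z‖ ^ 2

/-- Pointwise `|ϑu|²`. -/
noncomputable def thetaSq {n : ℕ} (q : ℕ) (u : (Fin q → Fin n) → (Fin n → ℂ) → ℂ)
    (z : Fin n → ℂ) : ℝ :=
  ∑ J ∈ Incr n (q - 1), ‖thetaC q u J z‖ ^ 2

/-- Remove the `i`-th entry of a `j`-tuple, giving a `(j-1)`-tuple. -/
def removeIdx {n j : ℕ} (I : Fin j → Fin n) (i : Fin j) : Fin (j - 1) → Fin n :=
  fun t => if (t : ℕ) < (i : ℕ) then I ⟨t, by have := t.isLt; omega⟩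
    else I ⟨(t : ℕ) + 1, by have := t.isLt; omega⟩

/-- The increasing `j`-tuple listing a finset `S` (with default `d` out of range). -/
def sortedTuple {n : ℕ} (j : ℕ) (S : Finset (Fin n)) (d : Fin n) : Fin j → Fin n :=
  fun t => (S.sort (· ≤ ·)).getD t d

end HM

/-! Since `kJ` is a rearrangement of `mJ'` with `J' = k ∪ (J ∖ m)`, antisymmetry absorbs the
sign and the left-hand side becomes the sum of `a_m φ_{mJ'}` over the pairs `k ∉ J`, `m ∈ J`.
The exchange `(J, m) ↦ (J', m)` is a bijection from these pairs onto the pairs `k ∈ J'`, `m ∉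
J'`, and the terms with `m ∈ J'` on the right-hand side vanish because `mJ'` has a repeated
index. -/

namespace HM

section Exchange

variable {ι M : Type*} [DecidableEq ι]

theorem card_insert_erase {S : Finset ι} {k m : ι} (hm : m ∈ S) (hk : k ∉ S) :
    (insert k (S.erase m)).card = S.card := by
  rw [Finset.card_insert_of_notMem (mt Finset.mem_of_mem_erase hk), Finset.card_erase_add_one hm]

variable [Fintype ι] [AddCommMonoid M]

theorem sum_powersetCard_exchange (q : ℕ) (k : ι) (f : Finset ι → ι → M) :
    ∑ S ∈ Finset.powersetCard q Finset.univ with k ∉ S, ∑ m ∈ S, f (insert k (S.erase m)) m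
      = ∑ S ∈ Finset.powersetCard q Finset.univ with k ∈ S, ∑ m ∈ Sᶜ, f S m := by
  rw [Finset.sum_sigma', Finset.sum_sigma']
  refine Finset.sum_bij' (fun x _ => ⟨insert k (x.1.erase x.2), x.2⟩)
    (fun x _ => ⟨insert x.2 (x.1.erase k), x.2⟩) ?_ ?_ ?_ ?_ fun _ _ => rfl
  all_goals
    rintro ⟨S, m⟩ h
    simp only [Finset.mem_sigma, Finset.mem_filter, Finset.mem_powersetCard_univ,
      Finset.mem_compl] at h
    obtain ⟨⟨hS, hk⟩, hm⟩ := h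
  · have hmk : m ≠ k := ne_of_mem_of_not_mem hm hk
    simp [card_insert_erase hm hk, hS, hmk]
  · have hkm : k ≠ m := ne_of_mem_of_not_mem hk hm
    simp [card_insert_erase hk hm, hS, hkm]
  · rw [Finset.erase_insert (mt Finset.mem_of_mem_erase hk), Finset.insert_erase hm]
  · rw [Finset.erase_insert (mt Finset.mem_of_mem_erase hm), Finset.insert_erase hk]

end Exchange

section MultiIndices

variable {n q : ℕ}

theorem mem_Incr {J : Fin q → Fin n} : J ∈ Incr n q ↔ StrictMono J := by
  simp only [Incr, Finset.mem_filter_univ, StrictMono]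

theorem sortedTuple_eq_orderEmbOfFin {S : Finset (Fin n)} (d : Fin n) (hS : S.card = q) :
    sortedTuple q S d = S.orderEmbOfFin hS := by
  funext t
  rw [Finset.orderEmbOfFin_apply, sortedTuple, List.getD_eq_getElem]
  rfl

theorem sortedTuple_mem_Incr {S : Finset (Fin n)} (d : Fin n) (hS : S.card = q) :
    sortedTuple q S d ∈ Incr n q := by
  rw [mem_Incr, sortedTuple_eq_orderEmbOfFin d hS]
  exact (S.orderEmbOfFin hS).strictMono

theorem image_sortedTuple {S : Finset (Fin n)} (d : Fin n) (hS : S.card = q) :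
    Finset.univ.image (sortedTuple q S d) = S := by
  rw [sortedTuple_eq_orderEmbOfFin d hS, Finset.image_orderEmbOfFin_univ]

theorem card_image_of_mem_Incr {J : Fin q → Fin n} (hJ : J ∈ Incr n q) :
    (Finset.univ.image J).card = q := by
  rw [Finset.card_image_of_injective _ (mem_Incr.1 hJ).injective, Finset.card_fin]

theorem sortedTuple_image {J : Fin q → Fin n} (d : Fin n) (hJ : J ∈ Incr n q) :
    sortedTuple q (Finset.univ.image J) d = J := by
  rw [sortedTuple_eq_orderEmbOfFin d (card_image_of_mem_Incr hJ)]
  exact (Finset.orderEmbOfFin_unique _ (fun x => Finset.mem_image_of_mem J (Finset.mem_univ x))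
    (mem_Incr.1 hJ)).symm

theorem sum_Incr_filter_image {M : Type*} [AddCommMonoid M] (d : Fin n)
    (p : Finset (Fin n) → Prop) [DecidablePred p] (f : (Fin q → Fin n) → M) :
    ∑ J ∈ Incr n q with p (Finset.univ.image J), f J
      = ∑ S ∈ Finset.powersetCard q Finset.univ with p S, f (sortedTuple q S d) := by
  refine Finset.sum_bij' (fun J _ => Finset.univ.image J) (fun S _ => sortedTuple q S d)
    ?_ ?_ ?_ ?_ ?_
  all_goals
    intro x hx
    simp only [Finset.mem_filter, Finset.mem_powersetCard_univ] at hx ⊢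
  · exact ⟨card_image_of_mem_Incr hx.1, hx.2⟩
  · exact ⟨sortedTuple_mem_Incr d hx.1, (image_sortedTuple d hx.1).symm ▸ hx.2⟩
  · exact sortedTuple_image d hx.1
  · exact image_sortedTuple d hx.1
  · rw [sortedTuple_image d hx.1]

theorem cons'_succ (k : Fin n) (J : Fin q → Fin n) :
    cons' (q + 1) k J = (Fin.cons k J : Fin (q + 1) → Fin n) := by
  funext i
  cases i using Fin.cases <;> simp [cons']

theorem cons'_injective_iff {k : Fin n} {J : Fin q → Fin n} :
    Function.Injective (cons' (q + 1) k J) ↔ k ∉ Set.range J ∧ Function.Injective J := by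
  rw [cons'_succ, Fin.cons_injective_iff]

theorem image_cons' (k : Fin n) (J : Fin q → Fin n) :
    Finset.univ.image (cons' (q + 1) k J) = insert k (Finset.univ.image J) := by
  rw [cons'_succ, ← Finset.coe_inj]
  simp [Fin.range_cons]

theorem permSign_comp {I : Fin q → Fin n} (hI : Function.Injective I) (π : Equiv.Perm (Fin q)) :
    permSign I (I ∘ π) = Equiv.Perm.sign π := by
  simp [permSign, hI, hI.comp_left.eq_iff]

theorem exists_perm_of_image_eq {I J : Fin q → Fin n} (hI : Function.Injective I)
    (hJ : Function.Injective J) (h : Finset.univ.image I = Finset.univ.image J) :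
    ∃ π : Equiv.Perm (Fin q), J = I ∘ π := by
  have hrange : Set.range J = Set.range I := by
    simpa using congrArg (fun S : Finset (Fin n) => (S : Set (Fin n))) h.symm
  refine ⟨(Equiv.ofInjective J hJ).trans
    ((Equiv.setCongr hrange).trans (Equiv.ofInjective I hI).symm), funext fun x => ?_⟩
  simp [Equiv.apply_ofInjective_symm hI]

end MultiIndices

section Alternating

variable {n q : ℕ} {M : Type*} [AddCommGroup M]

/-- Alternating coefficient systems with values in an additive group. Vanishing on repeated indices
is a separate field because it does not follow from antisymmetry when `M` has 2-torsion. -/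
structure IsAlternating (u : (Fin q → Fin n) → M) : Prop where
  map_comp_perm (σ : Equiv.Perm (Fin q)) (I : Fin q → Fin n) :
    u (I ∘ σ) = Equiv.Perm.sign σ • u I
  map_eq_zero_of_not_injective (I : Fin q → Fin n) : ¬ Function.Injective I → u I = 0

theorem IsCoeff.isAlternating {u : (Fin q → Fin n) → ℂ} (hu : IsCoeff u) : IsAlternating u where
  map_comp_perm σ I := by rw [hu, Units.smul_def, zsmul_eq_mul]
  map_eq_zero_of_not_injective I hI := by
    obtain ⟨x, y, hxy, hne⟩ := Function.not_injective_iff.1 hI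
    have hswap : I ∘ Equiv.swap x y = I := by
      rw [Equiv.comp_swap_eq_update, hxy, Function.update_eq_self, ← hxy, Function.update_eq_self]
    have hneg : u I = -u I := by
      simpa [hswap, Equiv.Perm.sign_swap hne] using hu (Equiv.swap x y) I
    exact self_eq_neg.1 hneg

theorem IsAlternating.permSign_smul {u : (Fin q → Fin n) → M} (hu : IsAlternating u)
    {I J : Fin q → Fin n} (hJ : Function.Injective J)
    (h : Finset.univ.image I = Finset.univ.image J) : permSign I J • u J = u I := by
  have hI : Function.Injective I := by
    rw [← Set.injOn_univ, ← Finset.coe_univ, ← Finset.card_image_iff, h,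
      Finset.card_image_of_injective _ hJ]
  obtain ⟨π, rfl⟩ := exists_perm_of_image_eq hI hJ h
  rw [permSign_comp hI, hu.map_comp_perm, ← Units.smul_def, smul_smul, Int.units_mul_self,
    one_smul]

variable {φ : (Fin (q + 1) → Fin n) → M}

theorem IsAlternating.permSign_exchange_smul (hφ : IsAlternating φ) {J : Fin q → Fin n}
    (hJ : J ∈ Incr n q) {k m d : Fin n} (hk : k ∉ Finset.univ.image J)
    (hm : m ∈ Finset.univ.image J) :
    permSign (cons' (q + 1) m (sortedTuple q (insert k ((Finset.univ.image J).erase m)) d))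
        (cons' (q + 1) k J) • φ (cons' (q + 1) k J)
      = φ (cons' (q + 1) m (sortedTuple q (insert k ((Finset.univ.image J).erase m)) d)) := by
  have hcard : (insert k ((Finset.univ.image J).erase m)).card = q :=
    (card_insert_erase hm hk).trans (card_image_of_mem_Incr hJ)
  refine hφ.permSign_smul (cons'_injective_iff.2 ⟨by simpa using hk, (mem_Incr.1 hJ).injective⟩) ?_
  rw [image_cons', image_cons', image_sortedTuple d hcard, Finset.insert_comm,
    Finset.insert_erase hm]

variable {R : Type*} [Ring R] [Module R M]

theorem IsAlternating.sum_permSign_exchange_smul (hφ : IsAlternating φ) (a : Fin n → R)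
    {J : Fin q → Fin n} (hJ : J ∈ Incr n q) {k d : Fin n} (hk : k ∉ Finset.univ.image J) :
    (∑ i, permSign (cons' (q + 1) (J i)
          (sortedTuple q (insert k ((Finset.univ.image J).erase (J i))) d))
          (cons' (q + 1) k J) • a (J i)) • φ (cons' (q + 1) k J)
      = ∑ m ∈ Finset.univ.image J,
          a m • φ (cons' (q + 1) m
            (sortedTuple q (insert k ((Finset.univ.image J).erase m)) d)) := by
  rw [Finset.sum_image (mem_Incr.1 hJ).injective.injOn, Finset.sum_smul]
  refine Finset.sum_congr rfl fun i _ => ?_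
  rw [smul_assoc, smul_comm,
    hφ.permSign_exchange_smul hJ hk (Finset.mem_image_of_mem J (Finset.mem_univ i))]

theorem IsAlternating.sum_compl_image_smul_cons' (hφ : IsAlternating φ) (a : Fin n → R)
    (J : Fin q → Fin n) :
    ∑ m ∈ (Finset.univ.image J)ᶜ, a m • φ (cons' (q + 1) m J)
      = ∑ m, a m • φ (cons' (q + 1) m J) := by
  refine Finset.sum_subset (Finset.subset_univ _) fun m _ hm => ?_
  have hrange : m ∈ Set.range J := by simpa using hm
  rw [hφ.map_eq_zero_of_not_injective _ fun h => (cons'_injective_iff.1 h).1 hrange, smul_zero]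

end Alternating

end HM

open HM in
theorem diagonal_error_term_general {R M : Type*} [Ring R] [AddCommGroup M] [Module R M] {n q : ℕ}
    (a : Fin n → R) {φ : (Fin (q + 1) → Fin n) → M} (hφ : IsAlternating φ) (k : Fin n) :
    ∑ J ∈ Incr n q with ∀ i, J i ≠ k,
        (∑ i, permSign (cons' (q + 1) (J i)
            (sortedTuple q (insert k ((Finset.univ.image J).erase (J i))) k))
            (cons' (q + 1) k J) • a (J i)) • φ (cons' (q + 1) k J)
      = ∑ J ∈ Incr n q with ∃ i, J i = k, ∑ m, a m • φ (cons' (q + 1) m J) := by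
  let f (S : Finset (Fin n)) (m : Fin n) : M := a m • φ (cons' (q + 1) m (sortedTuple q S k))
  have hmem (J : Fin q → Fin n) : (∃ i, J i = k) ↔ k ∈ Finset.univ.image J := by simp
  simp only [ne_eq, ← not_exists, hmem]
  calc
    _ = ∑ J ∈ Incr n q with k ∉ Finset.univ.image J,
          ∑ m ∈ Finset.univ.image J, f (insert k ((Finset.univ.image J).erase m)) m :=
      Finset.sum_congr rfl fun J hJ => hφ.sum_permSign_exchange_smul a
        (Finset.mem_filter.1 hJ).1 (Finset.mem_filter.1 hJ).2
    _ = ∑ S ∈ Finset.powersetCard q Finset.univ with k ∉ S,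
          ∑ m ∈ S, f (insert k (S.erase m)) m := by
      rw [sum_Incr_filter_image k (k ∉ ·)]
      refine Finset.sum_congr rfl fun S hS => ?_
      rw [image_sortedTuple k (Finset.mem_powersetCard_univ.1 (Finset.mem_filter.1 hS).1)]
    _ = ∑ S ∈ Finset.powersetCard q Finset.univ with k ∈ S, ∑ m ∈ Sᶜ, f S m :=
      sum_powersetCard_exchange q k f
    _ = ∑ S ∈ Finset.powersetCard q Finset.univ with k ∈ S, ∑ m, f S m := by
      refine Finset.sum_congr rfl fun S hS => ?_
      rw [← hφ.sum_compl_image_smul_cons' a,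
        image_sortedTuple k (Finset.mem_powersetCard_univ.1 (Finset.mem_filter.1 hS).1)]
    _ = _ := (sum_Incr_filter_image k (k ∈ ·) fun J => ∑ m, a m • φ (cons' (q + 1) m J)).symm

/-- the diagonal error-term computation from Lemma 4.3 (case `k = l`). -/
theorem diagonal_error_term (n j : ℕ) (hn : 1 ≤ n) (hj1 : 1 ≤ j) (hjn : j ≤ n)
    (a : Fin n → ℂ) (φ : (Fin j → Fin n) → ℂ) (hφ : HM.IsCoeff φ) (k : Fin n) :
    ∑ J ∈ (HM.Incr n (j - 1)).filter (fun J => ∀ i, J i ≠ k),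
        φ (HM.cons' j k J) * ∑ i : Fin (j - 1),
          ((HM.permSign
              (HM.cons' j (J i) (HM.sortedTuple (j - 1)
                (insert k ((Finset.image J Finset.univ).erase (J i))) k))
              (HM.cons' j k J) : ℤ) : ℂ) * a (J i)
      = ∑ J ∈ (HM.Incr n (j - 1)).filter (fun J => ∃ i, J i = k),
          ∑ m : Fin n, a m * φ (HM.cons' j m J) := by
  obtain ⟨q, rfl⟩ := Nat.exists_eq_add_of_le' hj1
  simpa only [zsmul_eq_mul, smul_eq_mul, mul_comm (φ _), Nat.add_one_sub_one] using
    diagonal_error_term_general a hφ.isAlternating k
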